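/- The generating function identity ∑_{n≥1} spt2bar(n) q^n = ∑_{n≥1} q^{2n} (-q^{2n+1}; q)_∞ / ((1-q^{2n})^2 (q^{2n+1}; q)_∞) holds as formal power series in q. -/

import Mathlib

/-- An overpartition of `n`: a partition of `n` together with a set of part
sizes that are overlined (the first occurrence of each such size is overlined). -/
def Overpartition (n : ℕ) : Type :=
  Σ p : Nat.Partition n, {s : Finset ℕ // s ⊆ p.parts.toFinset}

noncomputable instance (n : ℕ) : Fintype (Overpartition n) := by
  unfold Overpartition
  classical
  have : ∀ p : Nat.Partition n, Fintype {s : Finset ℕ // s ⊆ p.parts.toFinset} := fun p =>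
    Fintype.subtype p.parts.toFinset.powerset (by simp)
  exact Sigma.instFintype

/-- The smallest part of a partition (junk value `0` for the empty partition). -/
noncomputable def smallestPart {n : ℕ} (p : Nat.Partition n) : ℕ :=
  sInf {m | m ∈ p.parts}

open scoped Classical in
/-- `spt2bar n`: the total number of occurrences of the smallest part, summed over
all overpartitions of `n` whose smallest part is even and not overlined. -/
noncomputable def spt2bar (n : ℕ) : ℕ :=
  ∑ o : Overpartition n,
    if Even (smallestPart o.1) ∧ smallestPart o.1 ∉ o.2.1 then
      o.1.parts.count (smallestPart o.1)
    else 0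

/-- The infinite q-Pochhammer symbol `(a; q)_∞ = ∏_{j ≥ 0} (1 - a q^j)`. -/
noncomputable def qPochInf (a q : ℂ) : ℂ := ∏' j : ℕ, (1 - a * q ^ j)

/-- The finite q-Pochhammer symbol `(a; q)_n = ∏_{j = 0}^{n-1} (1 - a q^j)`. -/
noncomputable def qPoch (a q : ℂ) (n : ℕ) : ℂ := ∏ j ∈ Finset.range n, (1 - a * q ^ j)


section Analytic
open PowerSeries Finset
open scoped PowerSeries.WithPiTopology

/-- The power series `F` converges absolutely at `q` with value `v`. -/
def EvSum {K : Type*} [RCLike K] (q : K) (F : PowerSeries K) (v : K) : Prop :=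
  Summable (fun n => ‖coeff n F * q ^ n‖) ∧ ∑' n, coeff n F * q ^ n = v

/-- Partition weight sums. -/
noncomputable def cf (f : ℕ → ℕ → ℕ) (n : ℕ) : ℕ :=
  ∑ p : n.Partition, p.parts.toFinsupp.prod f

variable {K : Type*} [RCLike K]

lemma coeff_genFun_cast (f : ℕ → ℕ → ℕ) (n : ℕ) :
    coeff n (Nat.Partition.genFun (fun i c => (f i c : K))) = (cf f n : K) := by
  simp [cf, Finsupp.prod]

lemma EvSum.mul {q : K} {F G : PowerSeries K} {v w : K} (hF : EvSum q F v) (hG : EvSum q G w) :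
    EvSum q (F * G) (v * w) := by
  have key : ∀ n, coeff n (F * G) * q ^ n =
      ∑ kl ∈ antidiagonal n, (coeff kl.1 F * q ^ kl.1) * (coeff kl.2 G * q ^ kl.2) := by
    intro n
    rw [coeff_mul, Finset.sum_mul]
    refine Finset.sum_congr rfl fun kl h => ?_
    rw [← mem_antidiagonal.mp h, pow_add]; ring
  have hfun : (fun n => coeff n (F * G) * q ^ n) = fun n => ∑ kl ∈ antidiagonal n,
      ((fun n => coeff n F * q ^ n) kl.1 * (fun n => coeff n G * q ^ n) kl.2) := funext key
  have hs := summable_norm_sum_mul_antidiagonal_of_summable_norm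
    (f := fun n => coeff n F * q ^ n) (g := fun n => coeff n G * q ^ n) hF.1 hG.1
  have ht := tsum_mul_tsum_eq_tsum_sum_antidiagonal_of_summable_norm
    (f := fun n => coeff n F * q ^ n) (g := fun n => coeff n G * q ^ n) hF.1 hG.1
  refine ⟨?_, ?_⟩
  · exact hs.congr fun n => by rw [key n]
  · rw [hfun, ← ht, hF.2, hG.2]

lemma EvSum.one {q : K} : EvSum q (1 : PowerSeries K) 1 := by
  have h : ∀ n, n ≠ 0 → coeff n (1 : PowerSeries K) * q ^ n = 0 := by
    intro n hn; simp [coeff_one, hn]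
  constructor
  · refine summable_of_ne_finset_zero (s := {0}) fun n hn => ?_
    rw [h n (by simpa using hn), norm_zero]
  · rw [tsum_eq_single 0 h]; simp

lemma EvSum.prod {q : K} {ι : Type*} (s : Finset ι) {F : ι → PowerSeries K} {v : ι → K}
    (h : ∀ i ∈ s, EvSum q (F i) (v i)) : EvSum q (∏ i ∈ s, F i) (∏ i ∈ s, v i) := by
  classical
  induction s using Finset.induction_on with
  | empty => simpa using EvSum.one
  | insert a s ha ih =>
    rw [Finset.prod_insert ha, Finset.prod_insert ha]
    exact (h a (by simp)).mul (ih fun i hi => h i (by simp [hi]))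

lemma EvSum.add {q : K} {F G : PowerSeries K} {v w : K} (hF : EvSum q F v) (hG : EvSum q G w) :
    EvSum q (F + G) (v + w) := by
  constructor
  · refine Summable.of_nonneg_of_le (fun _ => norm_nonneg _) (fun n => ?_) (hF.1.add hG.1)
    rw [map_add, add_mul]; exact norm_add_le _ _
  · simp_rw [map_add, add_mul]
    rw [hF.1.of_norm.tsum_add hG.1.of_norm, hF.2, hG.2]

lemma EvSum.factor {q : K} (f : ℕ → ℕ → ℕ) (i : ℕ)
    (hs : Summable fun j : ℕ => ‖(f (i+1) (j+1) : K) * q ^ ((i+1)*(j+1))‖) :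
    EvSum q (1 + ∑' j, (f (i + 1) (j + 1) : K) • (X : PowerSeries K) ^ ((i + 1) * (j + 1)))
      (1 + ∑' j, (f (i+1) (j+1) : K) * q ^ ((i+1)*(j+1))) := by
  refine EvSum.one.add ?_
  set Φ := ∑' j, (f (i + 1) (j + 1) : K) • (X : PowerSeries K) ^ ((i + 1) * (j + 1)) with hΦ
  have hco : ∀ n, coeff n Φ = ∑' j, if n = (i+1)*(j+1) then (f (i+1) (j+1) : K) else 0 := by
    intro n
    rw [hΦ, (Nat.Partition.summable_genFun_term (fun i c => (f i c : K)) i).map_tsum _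
      (WithPiTopology.continuous_coeff _ _)]
    simp [coeff_X_pow]
  have hinj : Function.Injective (fun j : ℕ => (i+1)*(j+1)) := by
    intro a b h
    have := Nat.eq_of_mul_eq_mul_left (Nat.succ_pos i) h
    omega
  have h1 : ∀ j, coeff ((i+1)*(j+1)) Φ = (f (i+1) (j+1) : K) := by
    intro j
    rw [hco, tsum_eq_single j]
    · simp
    · intro b hb
      rw [if_neg]
      intro h; exact hb (hinj h).symm
  have h2 : ∀ n, n ∉ Set.range (fun j : ℕ => (i+1)*(j+1)) → coeff n Φ * q ^ n = 0 := by
    intro n hn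
    rw [hco]
    have : ∀ j, (if n = (i+1)*(j+1) then (f (i+1) (j+1) : K) else 0) = 0 := by
      intro j; rw [if_neg]; intro h; exact hn ⟨j, h.symm⟩
    simp [this]
  constructor
  · rw [← hinj.summable_iff]
    · simpa only [Function.comp_def, h1] using hs
    · intro n hn; rw [h2 n hn, norm_zero]
  · rw [← hinj.tsum_eq]
    · simp only [h1]
    · intro n hn
      by_contra h
      exact hn (h2 n h)

/-- truncation -/
def trunc' (f : ℕ → ℕ → ℕ) (N : ℕ) (i c : ℕ) : ℕ := if i ≤ N then f i c else 0

lemma genFun_trunc (f : ℕ → ℕ → ℕ) (N : ℕ) :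
    Nat.Partition.genFun (fun i c => (trunc' f N i c : K)) =
    ∏ i ∈ range N, (1 + ∑' j, (f (i + 1) (j + 1) : K) • (X : PowerSeries K) ^ ((i + 1) * (j + 1))) := by
  refine (Nat.Partition.hasProd_genFun (fun i c => (trunc' f N i c : K))).unique ?_
  have e : ∏ i ∈ range N, (1 + ∑' j, (f (i + 1) (j + 1) : K) •
      (X : PowerSeries K) ^ ((i + 1) * (j + 1))) = ∏ i ∈ range N, (1 + ∑' j,
      (trunc' f N (i + 1) (j + 1) : K) • (X : PowerSeries K) ^ ((i + 1) * (j + 1))) := by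
    refine Finset.prod_congr rfl fun i hi => ?_
    have : i + 1 ≤ N := by simpa using hi
    simp [trunc', this]
  rw [e]
  refine hasProd_prod_of_ne_finset_one fun i hi => ?_
  have : ¬ (i + 1 ≤ N) := by simpa using hi
  simp [trunc', this]

lemma cf_trunc_le (f : ℕ → ℕ → ℕ) (N n : ℕ) : cf (trunc' f N) n ≤ cf f n := by
  refine Finset.sum_le_sum fun p _ => Finset.prod_le_prod' fun i _ => ?_
  simp only [trunc']; split_ifs <;> simp

lemma part_le {n : ℕ} (p : n.Partition) {i : ℕ} (hi : i ∈ p.parts) : i ≤ n := by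
  have := Multiset.le_sum_of_mem hi
  rwa [p.parts_sum] at this

lemma cf_trunc_eq (f : ℕ → ℕ → ℕ) {N n : ℕ} (h : n ≤ N) : cf (trunc' f N) n = cf f n := by
  refine Finset.sum_congr rfl fun p _ => Finset.prod_congr rfl fun i hi => ?_
  have : i ∈ p.parts := by simpa using hi
  simp [trunc', (part_le p this).trans h]

lemma summable_dbl {r : ℝ} (h0 : 0 ≤ r) (h1 : r < 1) :
    Summable fun x : ℕ × ℕ => (2 * ((x.2 : ℝ) + 1)) * r ^ ((x.1+1)*(x.2+1)) := by
  have hn : ‖r‖ < 1 := by rwa [Real.norm_of_nonneg h0]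
  have hB : Summable fun j : ℕ => 2 * ((j:ℝ)+1) * r ^ j := by
    have := ((summable_pow_mul_geometric_of_norm_lt_one 1 hn).add
      (summable_geometric_of_lt_one h0 h1)).mul_left 2
    refine this.congr fun j => ?_
    simp; ring
  have := (summable_geometric_of_lt_one h0 h1).mul_of_nonneg hB (fun _ => by positivity)
    (fun _ => by positivity)
  refine Summable.of_nonneg_of_le (fun _ => by positivity) (fun x => ?_) this
  have : r ^ ((x.1+1)*(x.2+1)) ≤ r ^ (x.1 + x.2) :=
    pow_le_pow_of_le_one h0 h1.le (by nlinarith [Nat.zero_le (x.1*x.2)])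
  calc _ ≤ (2 * ((x.2 : ℝ) + 1)) * r ^ (x.1 + x.2) := by gcongr
    _ = _ := by rw [pow_add]; ring

lemma term_norm_le (f : ℕ → ℕ → ℕ) (hf : ∀ i c, f i (c+1) ≤ 2 * (c+1)) (q : K) (i j : ℕ) :
    ‖(f (i+1) (j+1) : K) * q ^ ((i+1)*(j+1))‖ ≤ (2 * ((j:ℝ)+1)) * ‖q‖ ^ ((i+1)*(j+1)) := by
  rw [norm_mul, norm_pow, RCLike.norm_natCast]
  gcongr
  exact_mod_cast hf (i+1) j

lemma summable_term (f : ℕ → ℕ → ℕ) (hf : ∀ i c, f i (c+1) ≤ 2 * (c+1)) {q : K} (hq : ‖q‖ < 1)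
    (i : ℕ) : Summable fun j : ℕ => ‖(f (i+1) (j+1) : K) * q ^ ((i+1)*(j+1))‖ :=
  Summable.of_nonneg_of_le (fun _ => norm_nonneg _) (fun j => term_norm_le f hf q i j)
    ((summable_dbl (norm_nonneg q) hq).prod_factor i)

lemma summable_norm_g (f : ℕ → ℕ → ℕ) (hf : ∀ i c, f i (c+1) ≤ 2 * (c+1)) {q : K}
    (hq : ‖q‖ < 1) :
    Summable fun i : ℕ => ‖∑' j : ℕ, (f (i+1) (j+1) : K) * q ^ ((i+1)*(j+1))‖ := by
  refine Summable.of_nonneg_of_le (fun _ => norm_nonneg _) (fun i => ?_)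
    (summable_dbl (norm_nonneg q) hq).prod
  refine (norm_tsum_le_tsum_norm (summable_term f hf hq i)).trans ?_
  exact (summable_term f hf hq i).tsum_le_tsum (fun j => term_norm_le f hf q i j)
    ((summable_dbl (norm_nonneg q) hq).prod_factor i)

lemma evSum_trunc (f : ℕ → ℕ → ℕ) (hf : ∀ i c, f i (c+1) ≤ 2 * (c+1)) {q : K} (hq : ‖q‖ < 1)
    (N : ℕ) :
    Summable (fun n => ‖(cf (trunc' f N) n : K) * q ^ n‖) ∧
    ∑' n, (cf (trunc' f N) n : K) * q ^ n =
      ∏ i ∈ range N, (1 + ∑' j : ℕ, (f (i+1) (j+1) : K) * q ^ ((i+1)*(j+1))) := by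
  have := EvSum.prod (q := q) (range N) (fun i _ => EvSum.factor f i (summable_term f hf hq i))
  rw [← genFun_trunc, EvSum] at this
  simpa only [coeff_genFun_cast] using this

lemma summable_cf_real (f : ℕ → ℕ → ℕ) (hf : ∀ i c, f i (c+1) ≤ 2 * (c+1)) {r : ℝ} (h0 : 0 ≤ r)
    (h1 : r < 1) : Summable fun n => (cf f n : ℝ) * r ^ n := by
  have hn : ‖r‖ < 1 := by rwa [Real.norm_of_nonneg h0]
  have hg := summable_norm_g (K := ℝ) f hf hn
  refine summable_of_sum_range_le (c := Real.exp (∑' i : ℕ, ‖∑' j : ℕ, (f (i+1) (j+1) : ℝ) * r ^ ((i+1)*(j+1))‖)) (fun n => by positivity) fun M => ?_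
  obtain ⟨hs, ht⟩ := evSum_trunc (K := ℝ) f hf hn M
  calc ∑ n ∈ range M, (cf f n : ℝ) * r ^ n = ∑ n ∈ range M, (cf (trunc' f M) n : ℝ) * r ^ n := by
        refine Finset.sum_congr rfl fun n hn => ?_
        rw [cf_trunc_eq f (mem_range.mp hn).le]
    _ ≤ ∑' n, (cf (trunc' f M) n : ℝ) * r ^ n :=
        hs.of_norm.sum_le_tsum _ (fun _ _ => by positivity)
    _ = _ := ht
    _ ≤ ∏ i ∈ range M, Real.exp ‖∑' j : ℕ, (f (i+1) (j+1) : ℝ) * r ^ ((i+1)*(j+1))‖ := by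
        refine Finset.prod_le_prod (fun i _ => ?_) (fun i _ => ?_)
        · have : 0 ≤ ∑' j : ℕ, (f (i+1) (j+1) : ℝ) * r ^ ((i+1)*(j+1)) :=
            tsum_nonneg fun _ => by positivity
          linarith
        · refine le_trans ?_ (Real.add_one_le_exp _)
          linarith [Real.le_norm_self (∑' j : ℕ, (f (i+1) (j+1) : ℝ) * r ^ ((i+1)*(j+1)))]
    _ = Real.exp (∑ i ∈ range M, ‖∑' j : ℕ, (f (i+1) (j+1) : ℝ) * r ^ ((i+1)*(j+1))‖) := by
        rw [Real.exp_sum]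
    _ ≤ _ := Real.exp_le_exp.mpr (hg.sum_le_tsum _ (fun _ _ => norm_nonneg _))

lemma summable_cf (f : ℕ → ℕ → ℕ) (hf : ∀ i c, f i (c+1) ≤ 2 * (c+1)) {q : K} (hq : ‖q‖ < 1) :
    Summable fun n => ‖(cf f n : K) * q ^ n‖ := by
  simpa [norm_mul, norm_pow] using summable_cf_real f hf (norm_nonneg q) hq

lemma multipliable_g (f : ℕ → ℕ → ℕ) (hf : ∀ i c, f i (c+1) ≤ 2 * (c+1)) {q : K} (hq : ‖q‖ < 1) :
    Multipliable fun i : ℕ => (1 + ∑' j : ℕ, (f (i+1) (j+1) : K) * q ^ ((i+1)*(j+1))) :=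
  multipliable_one_add_of_summable (summable_norm_g f hf hq)

theorem tsum_cf (f : ℕ → ℕ → ℕ) (hf : ∀ i c, f i (c+1) ≤ 2 * (c+1)) {q : K} (hq : ‖q‖ < 1) :
    ∑' n, (cf f n : K) * q ^ n =
      ∏' i : ℕ, (1 + ∑' j : ℕ, (f (i+1) (j+1) : K) * q ^ ((i+1)*(j+1))) := by
  have hT := (multipliable_g f hf hq).hasProd.tendsto_prod_nat
  have hT2 : Filter.Tendsto (fun N => ∑' n, (cf (trunc' f N) n : K) * q ^ n) Filter.atTop
      (nhds (∑' n, (cf f n : K) * q ^ n)) := by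
    refine tendsto_tsum_of_dominated_convergence (summable_cf f hf hq) (fun n => ?_)
      (Filter.Eventually.of_forall fun N n => ?_)
    · refine tendsto_const_nhds.congr' ?_
      filter_upwards [Filter.eventually_ge_atTop n] with N hN
      rw [cf_trunc_eq f hN]
    · rw [norm_mul, norm_mul, RCLike.norm_natCast, RCLike.norm_natCast]
      gcongr
      exact cf_trunc_le f N n
  simp_rw [(evSum_trunc f hf hq _).2] at hT2
  exact tendsto_nhds_unique hT2 hT

end Analytic

section Comb
open Finset

/-- weight: parts `≥ m`, with `m` weighted by its multiplicity, other parts by `2`. -/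
def fA (m i c : ℕ) : ℕ := if i < m then 0 else if i = m then c else 2

/-- weight: parts `> m`, each weighted by `2`. -/
def fB (m i _c : ℕ) : ℕ := if i ≤ m then 0 else 2

lemma fA_le (m i c : ℕ) : fA m i (c+1) ≤ 2 * (c+1) := by
  unfold fA; split_ifs <;> omega

lemma fB_le (m i c : ℕ) : fB m i (c+1) ≤ 2 * (c+1) := by
  unfold fB; split_ifs <;> omega

/-- Weight of a partition. -/
noncomputable def wt {n : ℕ} (p : n.Partition) : ℕ :=
  p.parts.count (smallestPart p) * 2 ^ (p.parts.toFinset.card - 1)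

/-- Weighted count with smallest part `m`. -/
noncomputable def am (m n : ℕ) : ℕ := ∑ p : n.Partition, if smallestPart p = m then wt p else 0

lemma smallestPart_mem {n : ℕ} (p : n.Partition) (h : p.parts ≠ 0) : smallestPart p ∈ p.parts := by
  obtain ⟨x, hx⟩ := Multiset.exists_mem_of_ne_zero h
  exact Nat.sInf_mem (s := {m | m ∈ p.parts}) ⟨x, hx⟩

lemma smallestPart_le {n : ℕ} (p : n.Partition) {x : ℕ} (h : x ∈ p.parts) : smallestPart p ≤ x :=
  Nat.sInf_le (s := {m | m ∈ p.parts}) h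

lemma smallestPart_zero {n : ℕ} (p : n.Partition) (h : p.parts = 0) : smallestPart p = 0 := by
  simp [smallestPart, h]

lemma wt_zero {n : ℕ} (p : n.Partition) (h : smallestPart p = 0) : wt p = 0 := by
  have : smallestPart p ∉ p.parts := by
    intro h'
    have := p.parts_pos h'
    omega
  simp [wt, Multiset.count_eq_zero_of_notMem this]

lemma prod_fA {n : ℕ} (p : n.Partition) {m : ℕ} (hm : 0 < m) :
    p.parts.toFinsupp.prod (fA m) = p.parts.toFinsupp.prod (fB m) +
      if smallestPart p = m then wt p else 0 := by
  classical
  simp only [Finsupp.prod, Multiset.toFinsupp_support, Multiset.toFinsupp_apply]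
  by_cases hmem : m ∈ p.parts
  · have hB : ∏ x ∈ p.parts.toFinset, fB m x (Multiset.count x p.parts) = 0 :=
      Finset.prod_eq_zero (i := m) (by simpa using hmem) (by simp [fB])
    rw [hB, zero_add]
    have hmem' : m ∈ p.parts.toFinset := by simpa using hmem
    by_cases hs : smallestPart p = m
    · rw [if_pos hs, ← Finset.mul_prod_erase _ _ hmem', wt, hs]
      congr 1
      · simp [fA]
      · rw [Finset.prod_congr rfl (g := fun _ => 2), Finset.prod_const, Finset.card_erase_of_mem hmem']
        intro x hx
        rw [Finset.mem_erase, Multiset.mem_toFinset] at hx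
        have := smallestPart_le p hx.2
        unfold fA
        rw [if_neg (by omega), if_neg hx.1]
    · rw [if_neg hs]
      have h1 := smallestPart_le p hmem
      have h2 := smallestPart_mem p (by rintro h; simp [h] at hmem)
      refine Finset.prod_eq_zero (i := smallestPart p) (by simpa using h2) ?_
      unfold fA
      rw [if_pos (by omega)]
  · rw [if_neg, add_zero]
    · refine Finset.prod_congr rfl fun x hx => ?_
      have : x ≠ m := by rintro rfl; exact hmem (by simpa using hx)
      unfold fA fB
      split_ifs <;> omega
    · rintro rfl
      by_cases h0 : p.parts = 0
      · rw [smallestPart_zero p h0] at hm; omega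
      · exact hmem (smallestPart_mem p h0)

lemma cf_fA {m : ℕ} (hm : 0 < m) (n : ℕ) : cf (fA m) n = cf (fB m) n + am m n := by
  simp only [cf, am]
  rw [← Finset.sum_add_distrib]
  exact Finset.sum_congr rfl fun p _ => prod_fA p hm

lemma card_overline {s : Finset ℕ} {a : ℕ} (ha : a ∈ s) :
    (s.powerset.filter (fun t => a ∉ t)).card = 2 ^ (s.card - 1) := by
  classical
  have : s.powerset.filter (fun t => a ∉ t) = (s.erase a).powerset := by
    ext t
    simp only [Finset.mem_filter, Finset.mem_powerset, Finset.subset_erase]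
  rw [this, Finset.card_powerset, Finset.card_erase_of_mem ha]

lemma spt2bar_eq (n : ℕ) :
    spt2bar n = ∑ p : n.Partition, if Even (smallestPart p) then wt p else 0 := by
  classical
  have h1 : spt2bar n = ∑ p : n.Partition, ∑ s ∈ p.parts.toFinset.powerset,
      if Even (smallestPart p) ∧ smallestPart p ∉ s then p.parts.count (smallestPart p) else 0 := by
    rw [Finset.sum_sigma']
    unfold spt2bar
    refine Finset.sum_bij' (fun o _ => (⟨o.1, o.2.1⟩ : Σ _ : n.Partition, Finset ℕ))
      (fun x hx => (⟨x.1, ⟨x.2, by simpa using hx⟩⟩ : Overpartition n)) ?_ ?_ ?_ ?_ ?_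
    · intro o _
      simpa using o.2.2
    · intros; exact Finset.mem_univ _
    · intros; rfl
    · intros; rfl
    · intro o _
      congr
  rw [h1]
  refine Finset.sum_congr rfl fun p _ => ?_
  by_cases he : Even (smallestPart p)
  · simp only [he, true_and, if_true]
    rw [← Finset.sum_filter, Finset.sum_const, smul_eq_mul]
    by_cases h0 : p.parts = 0
    · simp [wt, h0]
    · rw [card_overline (by simpa using smallestPart_mem p h0), wt, mul_comm]
  · simp [he]

lemma am_zero {m n : ℕ} (h : n < m) : am m n = 0 := by
  refine Finset.sum_eq_zero fun p _ => ?_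
  rw [if_neg]
  intro hs
  by_cases h0 : p.parts = 0
  · rw [smallestPart_zero p h0] at hs; omega
  · have := part_le p (smallestPart_mem p h0); omega

lemma spt2bar_eq_sum (n : ℕ) : spt2bar n = ∑ k ∈ range n, am (2 * (k+1)) n := by
  rw [spt2bar_eq]
  unfold am
  rw [Finset.sum_comm]
  refine Finset.sum_congr rfl fun p _ => ?_
  by_cases hz : smallestPart p = 0
  · simp [wt_zero p hz]
  · have hle : smallestPart p ≤ n :=
      part_le p (smallestPart_mem p fun h => hz (smallestPart_zero p h))
    by_cases he : Even (smallestPart p)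
    · rw [if_pos he]
      obtain ⟨t, ht⟩ := he
      rw [Finset.sum_eq_single (t - 1)]
      · rw [if_pos (by omega)]
      · intro b _ hb; rw [if_neg (by omega)]
      · intro h; exact absurd (Finset.mem_range.mpr (by omega)) h
    · rw [if_neg he]
      symm
      refine Finset.sum_eq_zero fun k _ => ?_
      rw [if_neg]
      intro h; exact he (h ▸ even_two_mul _)

end Comb

section Final
open Finset
variable {K : Type*} [RCLike K]

lemma norm_pow_lt {q : K} (hq : ‖q‖ < 1) (m : ℕ) : ‖q ^ (m+1)‖ < 1 := by
  rw [norm_pow]; exact pow_lt_one₀ (norm_nonneg _) hq (by simp)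

lemma multipliable_shift (f : ℕ → ℕ → ℕ) (hf : ∀ i c, f i (c+1) ≤ 2 * (c+1)) {q : K}
    (hq : ‖q‖ < 1) (m : ℕ) :
    Multipliable fun i : ℕ => (1 + ∑' j : ℕ, (f (i+m+1) (j+1) : K) * q ^ ((i+m+1)*(j+1))) := by
  have h : Summable fun i : ℕ => ‖∑' j : ℕ, (f (i+m+1) (j+1) : K) * q ^ ((i+m+1)*(j+1))‖ :=
    (summable_norm_g f hf hq).comp_injective (add_left_injective m)
  exact multipliable_one_add_of_summable h

lemma tprod_shift (f : ℕ → ℕ → ℕ) (hf : ∀ i c, f i (c+1) ≤ 2 * (c+1)) {q : K}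
    (hq : ‖q‖ < 1) (m : ℕ) :
    ∏' i : ℕ, (1 + ∑' j : ℕ, (f (i+1) (j+1) : K) * q ^ ((i+1)*(j+1))) =
    (∏ i ∈ range m, (1 + ∑' j : ℕ, (f (i+1) (j+1) : K) * q ^ ((i+1)*(j+1)))) *
    ∏' i : ℕ, (1 + ∑' j : ℕ, (f (i+m+1) (j+1) : K) * q ^ ((i+m+1)*(j+1))) :=
  (Multipliable.prod_mul_tprod_nat_mul'
    (f := fun i : ℕ => (1 + ∑' j : ℕ, (f (i+1) (j+1) : K) * q ^ ((i+1)*(j+1))))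
    (multipliable_shift f hf hq m)).symm

lemma tsum_fB {q : K} (hq : ‖q‖ < 1) (m : ℕ) :
    ∑' n, (cf (fB m) n : K) * q ^ n =
      ∏' i : ℕ, (1 + ∑' j : ℕ, 2 * q ^ ((i+m+1)*(j+1))) := by
  rw [tsum_cf _ (fB_le m) hq]
  rw [tprod_shift _ (fB_le m) hq m, Finset.prod_eq_one, one_mul]
  · refine tprod_congr fun i => ?_
    have : ¬ (i + m + 1 ≤ m) := by omega
    simp [fB, this]
  · intro i hi
    have : i + 1 ≤ m := by simpa using hi
    simp [fB, this]

lemma tsum_fA {q : K} (hq : ‖q‖ < 1) (k : ℕ) :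
    ∑' n, (cf (fA (k+1)) n : K) * q ^ n = (1 + q ^ (k+1) / (1 - q ^ (k+1)) ^ 2) *
      ∏' i : ℕ, (1 + ∑' j : ℕ, 2 * q ^ ((i+(k+1)+1)*(j+1))) := by
  rw [tsum_cf _ (fA_le (k+1)) hq]
  rw [tprod_shift _ (fA_le (k+1)) hq (k+1), Finset.prod_range_succ, Finset.prod_eq_one,
    one_mul]
  · congr 1
    · congr 1
      rw [← tsum_coe_mul_geometric_of_norm_lt_one (norm_pow_lt hq k),
        (hasSum_coe_mul_geometric_of_norm_lt_one (norm_pow_lt hq k)).summable.tsum_eq_zero_add]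
      simp [fA, pow_mul]
    · refine tprod_congr fun i => ?_
      have h1 : ¬ (i + (k+1) + 1 < k+1) := by omega
      have h2 : ¬ (i + (k+1) + 1 = k+1) := by omega
      simp only [fA, h1, h2, if_false, Nat.cast_ofNat]
  · intro i hi
    have : i < k := by simpa using hi
    simp [fA, this]

lemma summable_am {q : K} (hq : ‖q‖ < 1) (k : ℕ) :
    Summable fun n => ‖(am (k+1) n : K) * q ^ n‖ := by
  refine Summable.of_nonneg_of_le (fun _ => norm_nonneg _) (fun n => ?_)
    (summable_cf (fA (k+1)) (fA_le _) hq)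
  rw [norm_mul, norm_mul, RCLike.norm_natCast, RCLike.norm_natCast, cf_fA (Nat.succ_pos k)]
  gcongr
  exact Nat.le_add_left _ _

lemma tsum_am {q : K} (hq : ‖q‖ < 1) (k : ℕ) :
    ∑' n, (am (k+1) n : K) * q ^ n =
      q ^ (k+1) / (1 - q ^ (k+1)) ^ 2 * ∑' n, (cf (fB (k+1)) n : K) * q ^ n := by
  have h := tsum_fA hq k
  rw [← tsum_fB hq (k+1)] at h
  simp only [cf_fA (Nat.succ_pos k), Nat.cast_add, add_mul, Nat.succ_eq_add_one] at h
  rw [(summable_cf (fB (k+1)) (fB_le _) hq).of_norm.tsum_add (summable_am hq k).of_norm] at h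
  linear_combination h

lemma cf_fB_le (m n : ℕ) : cf (fB m) n ≤ cf (fB 0) n := by
  refine Finset.sum_le_sum fun p _ => Finset.prod_le_prod' fun i hi => ?_
  have : 0 < i := p.parts_pos (by simpa using hi)
  have h0 : ¬ (i ≤ 0) := by omega
  simp only [fB, h0, if_false]; split_ifs <;> simp

lemma summable_am_dbl {q : K} (hq : ‖q‖ < 1) :
    Summable fun x : ℕ × ℕ => (am (2 * (x.1+1)) x.2 : K) * q ^ x.2 := by
  have h0 := norm_nonneg q
  have hr : ‖(‖q‖ : ℝ)‖ < 1 := by simpa using hq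
  refine Summable.of_norm ?_
  rw [summable_prod_of_nonneg (fun _ => norm_nonneg _)]
  refine ⟨fun k => summable_am hq (2*k+1), ?_⟩
  set C := ∑' n, (cf (fB 0) n : ℝ) * ‖q‖ ^ n
  have hgeo : Summable fun k : ℕ => ‖q‖ ^ k * (1 / (1 - ‖q‖) ^ 2 * C) :=
    (summable_geometric_of_lt_one h0 hq).mul_right _
  refine Summable.of_nonneg_of_le (fun _ => tsum_nonneg fun _ => norm_nonneg _) (fun k => ?_) hgeo
  have e := tsum_am (K := ℝ) hr (2*k+1)
  simp only [norm_mul, norm_pow, RCLike.norm_natCast]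
  change ∑' n, (am (2*k+1+1) n : ℝ) * ‖q‖ ^ n ≤ _
  rw [e]
  have hC : ∑' n, (cf (fB (2*k+1+1)) n : ℝ) * ‖q‖ ^ n ≤ C := by
    refine Summable.tsum_le_tsum (fun n => ?_) (summable_cf_real _ (fB_le _) h0 hq)
      (summable_cf_real _ (fB_le _) h0 hq)
    gcongr
    exact cf_fB_le _ _
  have hC0 : 0 ≤ ∑' n, (cf (fB (2*k+1+1)) n : ℝ) * ‖q‖ ^ n := tsum_nonneg fun _ => by positivity
  have hd : 0 < 1 - ‖q‖ := by linarith
  have h1 : ‖q‖ ^ (2*k+1+1) ≤ ‖q‖ ^ k := pow_le_pow_of_le_one h0 hq.le (by omega)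
  have h2 : ‖q‖ ^ (2*k+1+1) ≤ ‖q‖ := pow_le_of_le_one h0 hq.le (by omega)
  calc _ ≤ ‖q‖ ^ k / (1 - ‖q‖) ^ 2 * C := by gcongr
    _ = _ := by ring

lemma summable_poch {q : ℂ} (hq : ‖q‖ < 1) (a : ℂ) : Summable fun j : ℕ => ‖a * q ^ j‖ := by
  simp_rw [norm_mul, norm_pow]
  exact (summable_geometric_of_lt_one (norm_nonneg q) hq).mul_left _

lemma tsum_fB_poch {q : ℂ} (hq : ‖q‖ < 1) (m : ℕ) :
    ∑' n, (cf (fB m) n : ℂ) * q ^ n = qPochInf (-q ^ (m+1)) q / qPochInf (q ^ (m+1)) q := by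
  have hx : ∀ i : ℕ, 1 - q ^ (i+m+1) ≠ 0 := by
    intro i h
    have := norm_pow_lt hq (i+m)
    rw [← sub_eq_zero.mp h] at this
    simp at this
  have hne : qPochInf (q ^ (m+1)) q ≠ 0 := by
    unfold qPochInf
    simp_rw [sub_eq_add_neg]
    refine tprod_one_add_ne_zero_of_summable (fun i => ?_) ?_
    · have := hx i
      rw [← sub_eq_add_neg, ← pow_add]
      rwa [show m + 1 + i = i + m + 1 by ring]
    · simpa only [norm_neg] using summable_poch hq (q ^ (m+1))
  have hm1 : Multipliable fun j : ℕ => 1 - q ^ (m+1) * q ^ j := by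
    simp_rw [sub_eq_add_neg]
    refine multipliable_one_add_of_summable ?_
    simpa only [norm_neg] using summable_poch hq (q ^ (m+1))
  have hsh : Multipliable fun i : ℕ => (1 + ∑' j : ℕ, 2 * q ^ ((i+m+1)*(j+1))) := by
    have := multipliable_shift (fB m) (fB_le m) hq m
    refine this.congr fun i => ?_
    have : ¬ (i + m + 1 ≤ m) := by omega
    simp [fB, this]
  rw [eq_div_iff hne, tsum_fB hq, qPochInf, qPochInf, ← hsh.tprod_mul hm1]
  refine tprod_congr fun i => ?_
  have hg : ∑' j : ℕ, 2 * q ^ ((i+m+1)*(j+1)) = 2 * (q ^ (i+m+1) * (1 - q ^ (i+m+1))⁻¹) := by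
    rw [tsum_mul_left, ← tsum_geometric_of_norm_lt_one (norm_pow_lt hq (i+m)),
      ← tsum_mul_left (a := q ^ (i+m+1))]
    congr 1
    refine tsum_congr fun j => ?_
    rw [pow_mul, pow_succ']
  rw [hg, neg_mul, ← pow_add, show m + 1 + i = i + m + 1 by ring]
  field_simp [hx i]
  ring

end Final

/-- Generating function for `spt2bar`:
`∑_{n≥1} spt2bar(n) q^n = ∑_{n≥1} q^{2n} (-q^{2n+1};q)_∞ / ((1-q^{2n})^2 (q^{2n+1};q)_∞)`. -/
theorem spt2bar_gen_fun (q : ℂ) (hq : ‖q‖ < 1) :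
    ∑' n : ℕ, (spt2bar n : ℂ) * q ^ n =
      ∑' n : ℕ, q ^ (2 * (n + 1)) * qPochInf (-q ^ (2 * (n + 1) + 1)) q /
        ((1 - q ^ (2 * (n + 1))) ^ 2 * qPochInf (q ^ (2 * (n + 1) + 1)) q) := by
  have h1 : ∀ n, (spt2bar n : ℂ) * q ^ n = ∑' k : ℕ, (am (2 * (k+1)) n : ℂ) * q ^ n := by
    intro n
    rw [tsum_eq_sum (s := Finset.range n), spt2bar_eq_sum, Nat.cast_sum, Finset.sum_mul]
    intro k hk
    have : n ≤ k := by simpa using hk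
    rw [am_zero (by omega)]; simp
  simp_rw [h1]
  have hcomm := (summable_am_dbl hq).tsum_comm' (f := fun k n => (am (2 * (k+1)) n : ℂ) * q ^ n)
    (fun k => (summable_am hq (2*k+1)).of_norm)
    (fun n => (summable_am_dbl hq).prod_symm.prod_factor n)
  rw [hcomm]
  refine tsum_congr fun k => ?_
  have := tsum_am hq (2*k+1)
  rw [tsum_fB_poch hq] at this
  rw [div_mul_div_comm] at this
  exact this
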